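/- For any uncertainty map M = ⟨N, U⟩ with s ∈ U and every EPDL formula φ, M,s ⊨ φ if and only if N^•, s_U ⊩ φ, where N^• is the ETS model constructed from the underlying Kripke model N and ⊩ is the ETS semantics. -/

import Mathlib

/-!
The map sending the state `s_Γ` of `N^•` to the pointed uncertainty map `(Γ, s)` is a bounded
morphism for every program: since `s ∈ Γ` and `s R_a t` give `t ∈ Γ|^a`, no program leads out of
its range. Hence the `⟦π⟧`-successors of `(Γ, s)` are exactly the images of the `π`-successors of
`s_Γ` (`eRel_toPointed_iff`), which has to be proved by simultaneous induction with truth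
preservation for formulas (`eSat_toPointed_iff`), because of tests. For `K`, the `∼^•`-class of
`s_Γ` consists of the `u_Γ` with `u ∈ Γ`, so both semantics quantify over `Γ`.
-/


mutual
/-- Formulas of EPDL. -/
inductive EForm (P A : Type) : Type
  | top : EForm P A
  | atom : P → EForm P A
  | neg : EForm P A → EForm P A
  | and : EForm P A → EForm P A → EForm P A
  | box : EProg P A → EForm P A → EForm P A
  | know : EForm P A → EForm P A
/-- Programs of EPDL. -/
inductive EProg (P A : Type) : Type
  | act : A → EProg P A
  | test : EForm P A → EProg P A
  | seq : EProg P A → EProg P A → EProg P A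
  | choice : EProg P A → EProg P A → EProg P A
  | star : EProg P A → EProg P A
end

namespace EForm
variable {P A : Type}
/-- φ ∨ ψ := ¬(¬φ ∧ ¬ψ) -/
def or (φ ψ : EForm P A) : EForm P A := neg (and (neg φ) (neg ψ))
/-- φ → ψ := ¬φ ∨ ψ -/
def imp (φ ψ : EForm P A) : EForm P A := or (neg φ) ψ
def iff (φ ψ : EForm P A) : EForm P A := and (imp φ ψ) (imp ψ φ)
/-- ⟨π⟩φ := ¬[π]¬φ -/
def dia (π : EProg P A) (φ : EForm P A) : EForm P A := neg (box π (neg φ))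
/-- ⦗π⦘φ := [π]φ ∧ ⟨π⟩φ -/
def bbox (π : EProg P A) (φ : EForm P A) : EForm P A := and (box π φ) (dia π φ)
/-- K̂φ := ¬K¬φ -/
def hatK (φ : EForm P A) : EForm P A := neg (know (neg φ))
end EForm

/-- A Kripke model with labelled relations. -/
structure Kripke (P A : Type) where
  S : Type
  R : A → S → S → Prop
  V : S → P → Prop

namespace Kripke
variable {P A : Type}
/-- U|^a -/
def img (N : Kripke P A) (a : A) (U : Set N.S) : Set N.S := {t | ∃ u ∈ U, N.R a u t}
/-- Iterated update U|^σ along a sequence of actions. -/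
def updU (N : Kripke P A) : Set N.S → List A → Set N.S
  | U, [] => U
  | U, a :: σ => N.updU (N.img a U) σ
end Kripke

mutual
/-- Truth of an EPDL formula at a pointed uncertainty map, represented by the
(fixed) Kripke model `N`, an uncertainty set `U` and a state `s`. -/
def eSat {P A : Type} (N : Kripke P A) : Set N.S → N.S → EForm P A → Prop
  | _, _, .top => True
  | _, s, .atom p => N.V s p
  | U, s, .neg φ => ¬ eSat N U s φ
  | U, s, .and φ ψ => eSat N U s φ ∧ eSat N U s ψ
  | U, s, .box π φ => ∀ c : Set N.S × N.S, eRel N π (U, s) c → eSat N c.1 c.2 φ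
  | U, _, .know φ => ∀ u ∈ U, eSat N U u φ
/-- The relation ⟦π⟧ between pointed uncertainty maps (over a fixed Kripke model
`N`, a pointed uncertainty map is a pair of an uncertainty set and a state). -/
def eRel {P A : Type} (N : Kripke P A) : EProg P A → Set N.S × N.S → Set N.S × N.S → Prop
  | .act a, c, c' => c'.1 = N.img a c.1 ∧ N.R a c.2 c'.2
  | .test ψ, c, c' => c' = c ∧ eSat N c.1 c.2 ψ
  | .seq π₁ π₂, c, c' => ∃ d, eRel N π₁ c d ∧ eRel N π₂ d c'
  | .choice π₁ π₂, c, c' => eRel N π₁ c c' ∨ eRel N π₂ c c'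
  | .star π, c, c' => Relation.ReflTransGen (fun x y => eRel N π x y) c c'
end

/-- Validity: truth at every pointed uncertainty map. -/
def eValid {P A : Type} (φ : EForm P A) : Prop :=
  ∀ (N : Kripke P A) (U : Set N.S), U.Nonempty → ∀ s ∈ U, eSat N U s φ

/-- An epistemic temporal structure: a Kripke model with both action relations
and an epistemic equivalence relation. -/
structure ETS (P A : Type) where
  S : Type
  R : A → S → S → Prop
  E : S → S → Prop
  equiv : Equivalence E
  V : S → P → Prop

mutual
/-- ETS semantics for EPDL formulas. -/
def etsSat {P A : Type} (M : ETS P A) : M.S → EForm P A → Prop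
  | _, .top => True
  | s, .atom p => M.V s p
  | s, .neg φ => ¬ etsSat M s φ
  | s, .and φ ψ => etsSat M s φ ∧ etsSat M s ψ
  | s, .box π φ => ∀ t, etsRel M π s t → etsSat M t φ
  | s, .know φ => ∀ u, M.E s u → etsSat M u φ
/-- ETS interpretation of EPDL programs as relations on states. -/
def etsRel {P A : Type} (M : ETS P A) : EProg P A → M.S → M.S → Prop
  | .act a, s, t => M.R a s t
  | .test ψ, s, t => s = t ∧ etsSat M s ψ
  | .seq π₁ π₂, s, t => ∃ u, etsRel M π₁ s u ∧ etsRel M π₂ u t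
  | .choice π₁ π₂, s, t => etsRel M π₁ s t ∨ etsRel M π₂ s t
  | .star π, s, t => Relation.ReflTransGen (fun x y => etsRel M π x y) s t
end

/-- The ETS model M^• built from a Kripke model: states are pairs s_Γ with
s ∈ Γ, R^•_a relates s_Γ to t_Δ iff s R_a t and Δ = Γ|^a, and s_Γ ∼ t_Δ iff
Γ = Δ. -/
def Kripke.bullet {P A : Type} (N : Kripke P A) : ETS P A where
  S := {p : N.S × Set N.S // p.1 ∈ p.2}
  R := fun a x y => N.R a x.val.1 y.val.1 ∧ y.val.2 = N.img a x.val.2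
  E := fun x y => x.val.2 = y.val.2
  equiv := ⟨fun _ => rfl, fun h => h.symm, fun h₁ h₂ => h₁.trans h₂⟩
  V := fun x p => N.V x.val.1 p

/-- The pointed uncertainty map `(Γ, s)` represented by the state `s_Γ` of `N^•`. -/
def Kripke.toPointed {P A : Type} (N : Kripke P A) (x : N.bullet.S) : Set N.S × N.S :=
  (x.val.2, x.val.1)

/-- If one step of `r` from the image of `g` corresponds to one step of `q`, then so do finite
chains of steps. -/
theorem reflTransGen_map_iff {α β : Type} {g : α → β} {q : α → α → Prop} {r : β → β → Prop}
    (h : ∀ x c, r (g x) c ↔ ∃ y, g y = c ∧ q x y) (x : α) (c : β) :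
    Relation.ReflTransGen r (g x) c ↔ ∃ y, g y = c ∧ Relation.ReflTransGen q x y := by
  constructor
  · intro hc
    induction hc with
    | refl => exact ⟨x, rfl, .refl⟩
    | tail _ hstep ih =>
      obtain ⟨y, rfl, hy⟩ := ih
      obtain ⟨z, rfl, hz⟩ := (h _ _).1 hstep
      exact ⟨z, rfl, hy.tail hz⟩
  · rintro ⟨y, rfl, hy⟩
    exact hy.lift g fun a b hab => (h a (g b)).2 ⟨b, rfl, hab⟩

mutual
theorem eSat_toPointed_iff {P A : Type} (N : Kripke P A) : ∀ (φ : EForm P A) (x : N.bullet.S),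
    eSat N (N.toPointed x).1 (N.toPointed x).2 φ ↔ etsSat N.bullet x φ
  | .top, x => by simp only [eSat, etsSat]
  | .atom p, x => by
    simp only [eSat, etsSat]
    exact Iff.rfl
  | .neg φ, x => by
    simp only [eSat, etsSat]
    exact not_congr (eSat_toPointed_iff N φ x)
  | .and φ ψ, x => by
    simp only [eSat, etsSat]
    exact and_congr (eSat_toPointed_iff N φ x) (eSat_toPointed_iff N ψ x)
  | .box π φ, x => by
    simp only [eSat, etsSat]
    constructor
    · intro h y hy
      exact (eSat_toPointed_iff N φ y).1
        (h (N.toPointed y) ((eRel_toPointed_iff N π x _).2 ⟨y, rfl, hy⟩))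
    · intro h c hc
      obtain ⟨y, rfl, hy⟩ := (eRel_toPointed_iff N π x c).1 hc
      exact (eSat_toPointed_iff N φ y).2 (h y hy)
  | .know φ, x => by
    simp only [eSat, etsSat]
    constructor
    · rintro h ⟨⟨u, Γ⟩, hu⟩ hE
      obtain rfl : x.val.2 = Γ := hE
      exact (eSat_toPointed_iff N φ ⟨(u, x.val.2), hu⟩).1 (h u hu)
    · intro h u hu
      exact (eSat_toPointed_iff N φ ⟨(u, x.val.2), hu⟩).2 (h ⟨(u, x.val.2), hu⟩ rfl)

/-- The `⟦π⟧`-successors of the pointed uncertainty map of `s_Γ` are exactly the pointed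
uncertainty maps of the `π`-successors of `s_Γ` in `N^•`. -/
theorem eRel_toPointed_iff {P A : Type} (N : Kripke P A) :
    ∀ (π : EProg P A) (x : N.bullet.S) (c : Set N.S × N.S),
      eRel N π (N.toPointed x) c ↔ ∃ y, N.toPointed y = c ∧ etsRel N.bullet π x y
  | .act a, x, c => by
    simp only [eRel, etsRel]
    constructor
    · obtain ⟨Δ, t⟩ := c
      rintro ⟨hΔ, hR⟩
      -- `t ∈ Γ|^a` is witnessed by `s` itself, so `t_Δ` is a state of `N^•`.
      have ht : t ∈ Δ := by
        rw [show Δ = _ from hΔ]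
        exact ⟨x.val.1, x.property, hR⟩
      exact ⟨⟨(t, Δ), ht⟩, rfl, hR, hΔ⟩
    · rintro ⟨y, rfl, hR, hy⟩
      exact ⟨hy, hR⟩
  | .test ψ, x, c => by
    simp only [eRel, etsRel]
    constructor
    · rintro ⟨rfl, h⟩
      exact ⟨x, rfl, rfl, (eSat_toPointed_iff N ψ x).1 h⟩
    · rintro ⟨y, rfl, rfl, h⟩
      exact ⟨rfl, (eSat_toPointed_iff N ψ x).2 h⟩
  | .seq π₁ π₂, x, c => by
    simp only [eRel, etsRel]
    constructor
    · rintro ⟨d, h₁, h₂⟩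
      obtain ⟨y, rfl, hy⟩ := (eRel_toPointed_iff N π₁ x d).1 h₁
      obtain ⟨z, rfl, hz⟩ := (eRel_toPointed_iff N π₂ y c).1 h₂
      exact ⟨z, rfl, y, hy, hz⟩
    · rintro ⟨z, rfl, y, hy, hz⟩
      exact ⟨N.toPointed y, (eRel_toPointed_iff N π₁ x _).2 ⟨y, rfl, hy⟩,
        (eRel_toPointed_iff N π₂ y _).2 ⟨z, rfl, hz⟩⟩
  | .choice π₁ π₂, x, c => by
    simp only [eRel, etsRel, eRel_toPointed_iff N π₁ x c, eRel_toPointed_iff N π₂ x c, and_or_left,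
      exists_or]
  | .star π, x, c => by
    simp only [eRel, etsRel]
    exact reflTransGen_map_iff (eRel_toPointed_iff N π) x c
end

/-- For any uncertainty map M = ⟨N, U⟩ with s ∈ U and every EPDL
formula φ, M,s ⊨ φ iff N^•, s_U ⊩ φ, where N^• is the ETS model constructed from
the underlying Kripke model N and ⊩ is the ETS semantics. -/
theorem ets_correspondence_pointed {P A : Type} [Countable P] [Countable A]
    (N : Kripke P A) (U : Set N.S) (hU : U.Nonempty) (s : N.S) (hs : s ∈ U)
    (φ : EForm P A) :
    eSat N U s φ ↔ etsSat N.bullet ⟨(s, U), hs⟩ φ := by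
  exact eSat_toPointed_iff N φ ⟨(s, U), hs⟩
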